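/- For 0 < q < 1, ∑_{k=0}^∞ q^k/(1−q^{k+1/2})² = ∑_{n=0}^∞ ((1 − 2q^{2n+3/2} + q^{n+1})·q^{n²+n} / ((1−q^{2n+1})(1+q^{n+1}))) · (q;q)_n⁴ / ((q^{1/2};q)_{n+1}² · (q;q)_{2n}), where (a;q)_m = ∏_{i=0}^{m−1}(1−a q^i) is the q-Pochhammer symbol. -/

import Mathlib

/-!
The identity is the case `x = √q` of an identity in a free parameter `x`. Put
`S(x) = ∑ₖ q^k / (1 - x q^k)²`, so that `S(x) - q S(q x) = 1 / (1 - x)²`. With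
`F_n(x) = q^{n²} x^{2n} (q;q)_n⁴ / ((x;q)_{n+1}² (q;q)_{2n})` and
`T_n(x) = (1 - 2 q^{2n+1} x + q^{n+1}) / ((1 - q^{2n+1}) (1 + q^{n+1})) · F_n(x)`
one has the WZ-type relation `T_n(x) - q T_n(q x) = F_n(x) - F_{n+1}(x)` (`wzT_sub_shift`), a
rational-function identity in `q`, `x` and `q^n`. Since `F_n(x) → 0`, summing over `n` shows that
`R(x) = ∑ₙ T_n(x)` satisfies the same functional equation as `S` (`wzT_tsum_shift`). Iterating it,
`R(x) = ∑_{k<K} q^k / (1 - x q^k)² + q^K R(q^K x)`, and the remainder vanishes because `R` is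
bounded on `[0, √q]`, by the uniform estimate `0 ≤ F_n(x) ≤ q^n / (1 - √q)²` (`wzF_le`).
At `x = √q` the factor `q^{n²} x^{2n}` equals `q^{n² + n}`.
-/

/-- The finite q-Pochhammer symbol `(a;q)_m = ∏_{i=0}^{m-1} (1 - a q^i)`. -/
def qPoch (a q : ℝ) (m : ℕ) : ℝ := ∏ i ∈ Finset.range m, (1 - a * q ^ i)

open Filter Topology

/-- The WZ companion `F_n(x) = q^{n²} x^{2n} (q;q)_n⁴ / ((x;q)_{n+1}² (q;q)_{2n})`. -/
noncomputable def wzF (q x : ℝ) (n : ℕ) : ℝ :=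
  q ^ (n ^ 2) * x ^ (2 * n) * qPoch q q n ^ 4 / (qPoch x q (n + 1) ^ 2 * qPoch q q (2 * n))

/-- The summand `T_n(x)` of the accelerated series, with a free parameter `x` in place of `√q`;
the power `q^{n² + n}` becomes `q^{n²} x^{2n}`. -/
noncomputable def wzT (q x : ℝ) (n : ℕ) : ℝ :=
  (1 - 2 * q ^ (2 * n + 1) * x + q ^ (n + 1)) / ((1 - q ^ (2 * n + 1)) * (1 + q ^ (n + 1)))
    * wzF q x n

lemma qPoch_succ (a q : ℝ) (m : ℕ) : qPoch a q (m + 1) = qPoch a q m * (1 - a * q ^ m) := by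
  simp [qPoch, Finset.prod_range_succ]

lemma qPoch_succ' (a q : ℝ) (m : ℕ) : qPoch a q (m + 1) = (1 - a) * qPoch (q * a) q m := by
  simp only [qPoch, Finset.prod_range_succ', pow_zero, mul_one]
  rw [mul_comm]
  congr 1
  exact Finset.prod_congr rfl fun i _ => by ring

lemma qPoch_add (a q : ℝ) (m n : ℕ) :
    qPoch a q (m + n) = qPoch a q m * qPoch (a * q ^ m) q n := by
  simp only [qPoch, Finset.prod_range_add]
  congr 1
  exact Finset.prod_congr rfl fun i _ => by ring

section

variable {q : ℝ}

lemma one_sub_mul_pow_pos (hq0 : 0 < q) (hq1 : q < 1) {a : ℝ} (ha : a < 1) (i : ℕ) :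
    0 < 1 - a * q ^ i := by
  have h1 : q ^ i ≤ 1 := pow_le_one₀ hq0.le hq1.le
  have h2 : 0 < q ^ i := pow_pos hq0 i
  nlinarith

lemma qPoch_pos (hq0 : 0 < q) (hq1 : q < 1) {a : ℝ} (ha : a < 1) (m : ℕ) :
    0 < qPoch a q m :=
  Finset.prod_pos fun i _ => one_sub_mul_pow_pos hq0 hq1 ha i

lemma qPoch_anti (hq0 : 0 < q) (hq1 : q < 1) {a b : ℝ} (hab : a ≤ b) (hb : b < 1) (m : ℕ) :
    qPoch b q m ≤ qPoch a q m := by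
  refine Finset.prod_le_prod (fun i _ => (one_sub_mul_pow_pos hq0 hq1 hb i).le) fun i _ => ?_
  have := mul_le_mul_of_nonneg_right hab (pow_pos hq0 i).le
  linarith

/-- The rational-function identity behind the proof: it reduces to a polynomial identity in `q`,
`x` and `y = q^n`. -/
lemma wzT_sub_shift (hq0 : 0 < q) (hq1 : q < 1) {x : ℝ} (hx1 : x < 1) (n : ℕ) :
    wzT q x n - q * wzT q (q * x) n = wzF q x n - wzF q x (n + 1) := by
  have hA := (qPoch_pos hq0 hq1 hq1 n).ne'
  have hB := (qPoch_pos hq0 hq1 hq1 (2 * n)).ne'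
  have hP := (qPoch_pos hq0 hq1 hx1 (n + 1)).ne'
  have hx : (1 - x) ≠ 0 := by linarith
  have hxn := (one_sub_mul_pow_pos hq0 hq1 hx1 (n + 1)).ne'
  have h1 := (one_sub_mul_pow_pos hq0 hq1 hq1 n).ne'
  have h2 := (one_sub_mul_pow_pos hq0 hq1 hq1 (2 * n)).ne'
  have h3 : 1 + q * q ^ n ≠ 0 := by positivity
  have hsh : qPoch (q * x) q (n + 1) = qPoch x q (n + 1) * (1 - x * q ^ (n + 1)) / (1 - x) := by
    rw [eq_div_iff hx, ← qPoch_succ, qPoch_succ' x q (n + 1), mul_comm]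
  have hQ : qPoch q q (2 * (n + 1))
      = qPoch q q (2 * n) * (1 - q * q ^ (2 * n)) * ((1 - q * q ^ n) * (1 + q * q ^ n)) := by
    rw [show 2 * (n + 1) = 2 * n + 1 + 1 by ring, qPoch_succ, qPoch_succ]
    ring
  unfold wzT wzF
  rw [hsh, hQ, qPoch_succ q q n, qPoch_succ x q (n + 1)]
  rw [show (n + 1) ^ 2 = n ^ 2 + 2 * n + 1 by ring, show 2 * (n + 1) = 2 * n + 2 by ring]
  rw [show 2 * n = n * 2 by ring] at *
  simp only [mul_pow, pow_add, pow_mul, pow_one] at *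
  generalize q ^ n ^ 2 = c at *
  generalize qPoch q q n = A at *
  generalize qPoch q q (n * 2) = B at *
  generalize qPoch x q (n + 1) = P at *
  generalize q ^ n = y at *
  generalize x ^ n = z at *
  rw [mul_comm q] at h1 h2 h3
  rw [mul_comm x] at hxn
  simp only [mul_comm q (y ^ 2), mul_comm q y, mul_comm x (y * q)]
  field_simp
  ring

/-- Uniform bound, using `(x;q)_{n+1} ≥ (s;q)_{n+1} ≥ (1 - s) (q;q)_n` and
`(q;q)_{2n} ≥ (q;q)_n²`. -/
lemma wzF_le (hq0 : 0 < q) (hq1 : q < 1) {s x : ℝ} (hs : s ^ 2 = q) (hs1 : s < 1)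
    (hx0 : 0 ≤ x) (hxs : x ≤ s) (n : ℕ) :
    0 ≤ wzF q x n ∧ wzF q x n ≤ q ^ n * (1 / (1 - s) ^ 2) := by
  have hA := qPoch_pos hq0 hq1 hq1 n
  have hB := qPoch_pos hq0 hq1 hq1 (2 * n)
  have hP := qPoch_pos hq0 hq1 (hxs.trans_lt hs1) (n + 1)
  have hs' : 0 < 1 - s := by linarith
  refine ⟨by unfold wzF; positivity, ?_⟩
  have hPle : (1 - s) * qPoch q q n ≤ qPoch x q (n + 1) := by
    refine le_trans ?_ (qPoch_anti hq0 hq1 hxs hs1 _)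
    rw [qPoch_succ']
    refine mul_le_mul_of_nonneg_left (qPoch_anti hq0 hq1 ?_ hq1 n) hs'.le
    nlinarith
  have hBle : qPoch q q n * qPoch q q n ≤ qPoch q q (2 * n) := by
    rw [two_mul, qPoch_add]
    refine mul_le_mul_of_nonneg_left (qPoch_anti hq0 hq1 ?_ hq1 n) hA.le
    have : q ^ n ≤ 1 := pow_le_one₀ hq0.le hq1.le
    nlinarith
  have hx2 : x ^ (2 * n) ≤ q ^ n := by
    rw [pow_mul, ← hs]
    gcongr
  have hc : q ^ (n ^ 2) * x ^ (2 * n) ≤ q ^ n := by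
    have h1 : q ^ (n ^ 2) ≤ 1 := pow_le_one₀ hq0.le hq1.le
    calc q ^ (n ^ 2) * x ^ (2 * n) ≤ 1 * q ^ n := by gcongr
      _ = q ^ n := one_mul _
  have hden : (1 - s) ^ 2 * qPoch q q n ^ 4 ≤ qPoch x q (n + 1) ^ 2 * qPoch q q (2 * n) := by
    calc (1 - s) ^ 2 * qPoch q q n ^ 4
        = ((1 - s) * qPoch q q n) ^ 2 * (qPoch q q n * qPoch q q n) := by ring
      _ ≤ _ := by gcongr
  unfold wzF
  rw [mul_div_assoc]
  refine mul_le_mul hc ?_ (by positivity) (by positivity)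
  rw [div_le_div_iff₀ (by positivity) (by positivity)]
  linarith

lemma wzT_abs_le (hq0 : 0 < q) (hq1 : q < 1) {s x : ℝ} (hs0 : 0 < s) (hs : s ^ 2 = q)
    (hs1 : s < 1) (hx0 : 0 ≤ x) (hxs : x ≤ s) (n : ℕ) :
    |wzT q x n| ≤ q ^ n * (2 / (1 - q) * (1 / (1 - s) ^ 2)) := by
  obtain ⟨hF0, hF⟩ := wzF_le hq0 hq1 hs hs1 hx0 hxs n
  have hq' : 0 < 1 - q := by linarith
  have ha : 0 < q ^ (n + 1) := by positivity
  have ha1 : q ^ (n + 1) ≤ 1 := pow_le_one₀ hq0.le hq1.le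
  have hb : 0 < q ^ (2 * n + 1) := by positivity
  have hbq : q ^ (2 * n + 1) ≤ q := pow_le_of_le_one hq0.le hq1.le (by omega)
  have hbx : q ^ (2 * n + 1) * x ≤ 1 := by nlinarith
  have hbx0 : 0 ≤ q ^ (2 * n + 1) * x := by positivity
  have hden : 1 - q ≤ (1 - q ^ (2 * n + 1)) * (1 + q ^ (n + 1)) := by nlinarith
  unfold wzT
  rw [abs_mul, abs_of_nonneg hF0, abs_div, abs_of_pos (hq'.trans_le hden)]
  calc _ ≤ 2 / (1 - q) * (q ^ n * (1 / (1 - s) ^ 2)) := by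
        gcongr
        rw [abs_le]
        constructor <;> linarith
    _ = _ := by ring

lemma wzT_summable (hq0 : 0 < q) (hq1 : q < 1) {s x : ℝ} (hs0 : 0 < s) (hs : s ^ 2 = q)
    (hs1 : s < 1) (hx0 : 0 ≤ x) (hxs : x ≤ s) : Summable (wzT q x) :=
  Summable.of_norm_bounded ((summable_geometric_of_lt_one hq0.le hq1).mul_right _)
    (wzT_abs_le hq0 hq1 hs0 hs hs1 hx0 hxs)

lemma wzT_tsum_abs_le (hq0 : 0 < q) (hq1 : q < 1) {s x : ℝ} (hs0 : 0 < s) (hs : s ^ 2 = q)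
    (hs1 : s < 1) (hx0 : 0 ≤ x) (hxs : x ≤ s) :
    |∑' n, wzT q x n| ≤ ∑' n : ℕ, q ^ n * (2 / (1 - q) * (1 / (1 - s) ^ 2)) := by
  rw [← Real.norm_eq_abs]
  exact tsum_of_norm_bounded ((summable_geometric_of_lt_one hq0.le hq1).mul_right _).hasSum
    (wzT_abs_le hq0 hq1 hs0 hs hs1 hx0 hxs)

/-- The functional equation `R(x) = 1 / (1 - x)² + q R(q x)`, from telescoping `F_n(x)` in `n`. -/
lemma wzT_tsum_shift (hq0 : 0 < q) (hq1 : q < 1) {s x : ℝ} (hs0 : 0 < s) (hs : s ^ 2 = q)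
    (hs1 : s < 1) (hx0 : 0 ≤ x) (hxs : x ≤ s) :
    ∑' n, wzT q x n = 1 / (1 - x) ^ 2 + q * ∑' n, wzT q (q * x) n := by
  have hS := wzT_summable hq0 hq1 hs0 hs hs1 hx0 hxs
  have hS' := wzT_summable hq0 hq1 hs0 hs hs1 (x := q * x) (by positivity) (by nlinarith)
  have hF : Tendsto (wzF q x) atTop (𝓝 0) := by
    refine squeeze_zero (fun n => (wzF_le hq0 hq1 hs hs1 hx0 hxs n).1)
      (fun n => (wzF_le hq0 hq1 hs hs1 hx0 hxs n).2) ?_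
    simpa only [zero_mul] using (tendsto_pow_atTop_nhds_zero_of_lt_one hq0.le hq1).mul_const (1 / (1 - s) ^ 2)
  have hlim := (hS.hasSum.sub (hS'.hasSum.mul_left q)).tendsto_sum_nat
  simp only [wzT_sub_shift hq0 hq1 (hxs.trans_lt hs1), Finset.sum_range_sub'] at hlim
  have h0 : wzF q x 0 = 1 / (1 - x) ^ 2 := by simp [wzF, qPoch]
  have := tendsto_nhds_unique hlim (hF.const_sub _)
  rw [h0] at this
  linarith

lemma wzT_tsum_iterate (hq0 : 0 < q) (hq1 : q < 1) {s : ℝ} (hs0 : 0 < s) (hs : s ^ 2 = q)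
    (hs1 : s < 1) (K : ℕ) :
    ∑' n, wzT q s n = ∑ k ∈ Finset.range K, q ^ k / (1 - q ^ k * s) ^ 2
      + q ^ K * ∑' n, wzT q (q ^ K * s) n := by
  induction K with
  | zero => simp
  | succ K ih =>
    have h1 : q ^ K ≤ 1 := pow_le_one₀ hq0.le hq1.le
    rw [ih, wzT_tsum_shift hq0 hq1 hs0 hs hs1 (x := q ^ K * s) (by positivity) (by nlinarith),
      Finset.sum_range_succ, show q ^ (K + 1) * s = q * (q ^ K * s) by ring]
    ring

end

theorem q_guillera_analogue (q : ℝ) (hq0 : 0 < q) (hq1 : q < 1) :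
    ∑' k : ℕ, q ^ k / (1 - q ^ k * Real.sqrt q) ^ 2 =
      ∑' n : ℕ,
        ((1 - 2 * q ^ (2 * n + 1) * Real.sqrt q + q ^ (n + 1)) * q ^ (n ^ 2 + n)
            / ((1 - q ^ (2 * n + 1)) * (1 + q ^ (n + 1))))
          * qPoch q q n ^ 4
          / (qPoch (Real.sqrt q) q (n + 1) ^ 2 * qPoch q q (2 * n)) := by
  have hs0 : 0 < √q := Real.sqrt_pos.2 hq0
  have hs : √q ^ 2 = q := Real.sq_sqrt hq0.le
  have hs1 : √q < 1 := by nlinarith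
  have hT : ∀ n : ℕ, ((1 - 2 * q ^ (2 * n + 1) * √q + q ^ (n + 1)) * q ^ (n ^ 2 + n)
            / ((1 - q ^ (2 * n + 1)) * (1 + q ^ (n + 1))))
          * qPoch q q n ^ 4
          / (qPoch (√q) q (n + 1) ^ 2 * qPoch q q (2 * n)) = wzT q (√q) n := by
    intro n
    unfold wzT wzF
    rw [pow_mul (√q) 2 n, hs, pow_add q (n ^ 2) n]
    ring
  simp only [hT]
  refine HasSum.tsum_eq ((hasSum_iff_tendsto_nat_of_nonneg (fun k => by positivity) _).2 ?_)
  have hrem : Tendsto (fun K : ℕ => q ^ K * ∑' n, wzT q (q ^ K * √q) n) atTop (𝓝 0) := by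
    refine squeeze_zero_norm (a := fun K : ℕ =>
      q ^ K * ∑' n : ℕ, q ^ n * (2 / (1 - q) * (1 / (1 - √q) ^ 2))) (fun K => ?_) ?_
    · have h1 : q ^ K ≤ 1 := pow_le_one₀ hq0.le hq1.le
      rw [norm_mul, Real.norm_of_nonneg (by positivity : 0 ≤ q ^ K)]
      refine mul_le_mul_of_nonneg_left ?_ (by positivity)
      exact wzT_tsum_abs_le hq0 hq1 hs0 hs hs1 (by positivity) (by nlinarith)
    · simpa only [zero_mul] using (tendsto_pow_atTop_nhds_zero_of_lt_one hq0.le hq1).mul_const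
        (∑' n : ℕ, q ^ n * (2 / (1 - q) * (1 / (1 - √q) ^ 2)))
  have hlim := hrem.const_sub (∑' n, wzT q (√q) n)
  rw [sub_zero] at hlim
  refine hlim.congr fun K => ?_
  rw [wzT_tsum_iterate hq0 hq1 hs0 hs hs1 K]
  ring
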